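/- arXiv:1712.03393 — 6 statements merged into one kernel-verified Lean document; each statement's English description precedes it below -/
import Mathlib

section
/- Let n ≥ 1 and let Z be an n×n real matrix such that every row sum and every column sum of Z equals l. Set N = Z - (l/n)•J, where J is the n×n all-ones matrix. If N is nilpotent with N^k = 0, then Z^k = (l^k/n)•J, a constant matrix. -/
open Matrix BigOperators

/-- If `Z` is doubly affine with magic constant `l` and
`N = Z - (l/n) • J` satisfies `N ^ k = 0`, then `Z ^ k = (l^k / n) • J`. -/
theorem pow_eq_constant_of_nilpotent_part {n : ℕ} (hn : 1 ≤ n)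
    (Z : Matrix (Fin n) (Fin n) ℝ) (l : ℝ) (k : ℕ)
    (hrow : ∀ i, ∑ j, Z i j = l) (hcol : ∀ j, ∑ i, Z i j = l)
    (J : Matrix (Fin n) (Fin n) ℝ) (hJ : J = Matrix.of fun _ _ => (1 : ℝ))
    (hN : (Z - (l / n) • J) ^ k = 0) :
    Z ^ k = (l ^ k / n) • J := by
  have hn0 : (n : ℝ) ≠ 0 := by
    have : n ≠ 0 := by omega
    exact_mod_cast this
  have hJZ : J * Z = l • J := by
    subst hJ
    ext i j
    simp [Matrix.mul_apply, hcol]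
  have hZJ : Z * J = l • J := by
    subst hJ
    ext i j
    simp [Matrix.mul_apply, hrow]
  have hJJ : J * J = (n : ℝ) • J := by
    subst hJ
    ext i j
    simp [Matrix.mul_apply]
  obtain ⟨N, hNdef⟩ : ∃ N, N = Z - (l / n) • J := ⟨_, rfl⟩
  rw [← hNdef] at hN
  have hNJ : N * J = 0 := by
    rw [hNdef, sub_mul, smul_mul_assoc, hJJ, hZJ, smul_smul, div_mul_cancel₀ _ hn0, sub_self]
  have hZ : Z = N + (l / n) • J := by rw [hNdef, sub_add_cancel]
  have key : ∀ m : ℕ, Z ^ (m + 1) = N ^ (m + 1) + (l ^ (m + 1) / n) • J := by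
    intro m
    induction m with
    | zero => simpa using hZ
    | succ m ih =>
      have h1 : N ^ (m + 1) * Z = N ^ (m + 1 + 1) := by
        rw [hZ, mul_add, mul_smul_comm, pow_succ N m, mul_assoc (N ^ m) N J, hNJ, mul_zero,
          smul_zero, add_zero, ← pow_succ, ← pow_succ]
      rw [pow_succ Z, ih, add_mul, h1, smul_mul_assoc, hJZ, smul_smul]
      congr 2
      ring
  cases k with
  | zero =>
    exfalso
    have h := congrFun (congrFun hN ⟨0, hn⟩) ⟨0, hn⟩
    simp at h
  | succ m => rw [key m, hN, zero_add]
end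

section
/- Let n ≥ 1 and let Z be an n×n real matrix such that every row sum and every column sum of Z equals l, and suppose Z - (l/n)•J is nilpotent with (Z - (l/n)•J)^k = 0, where J is the n×n all-ones matrix. Then for every integer p ≥ k one has Z^p = (l^p/n)•J; that is, all powers of Z from the k-th onward are constant matrices. -/
open Matrix BigOperators

/-- If `Z` is doubly affine with magic constant `l` and
`(Z - (l/n) • J) ^ k = 0`, then for every `p ≥ k`, `Z ^ p = (l^p / n) • J`;
all powers from the `k`-th onward are constant matrices. -/
theorem pow_eq_constant_of_nilpotent_part_of_le {n : ℕ} (hn : 1 ≤ n)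
    (Z : Matrix (Fin n) (Fin n) ℝ) (l : ℝ) (k : ℕ)
    (hrow : ∀ i, ∑ j, Z i j = l) (hcol : ∀ j, ∑ i, Z i j = l)
    (J : Matrix (Fin n) (Fin n) ℝ) (hJ : J = Matrix.of fun _ _ => (1 : ℝ))
    (hN : (Z - (l / n) • J) ^ k = 0) :
    ∀ p, k ≤ p → Z ^ p = (l ^ p / n) • J := by
  have hn0 : (n : ℝ) ≠ 0 := by
    have : n ≠ 0 := by omega
    exact_mod_cast this
  haveI : Nonempty (Fin n) := ⟨⟨0, hn⟩⟩
  have hZJ : Z * J = l • J := by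
    ext i j
    simp [hJ, Matrix.mul_apply, hrow]
  have hJZ : J * Z = l • J := by
    ext i j
    simp [hJ, Matrix.mul_apply, hcol]
  have hJJ : J * J = (n : ℝ) • J := by
    ext i j
    simp [hJ, Matrix.mul_apply]
  obtain ⟨N, hNdef⟩ : ∃ N, N = Z - (l / n) • J := ⟨_, rfl⟩
  rw [← hNdef] at hN
  have hNJ : N * J = 0 := by
    rw [hNdef, sub_mul, hZJ, smul_mul_assoc, hJJ, smul_smul, div_mul_cancel₀ _ hn0, sub_self]
  have hZ : Z = N + (l / n) • J := by rw [hNdef]; abel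
  have key : ∀ m : ℕ, Z ^ (m + 1) = N ^ (m + 1) + (l ^ (m + 1) / n) • J := by
    intro m
    induction m with
    | zero => simpa using hZ
    | succ m ih =>
      have h1 : N ^ (m + 1) * Z = N ^ (m + 1 + 1) := by
        rw [hZ, mul_add, mul_smul_comm, pow_succ N m, mul_assoc (N ^ m) N J, hNJ, mul_zero,
          smul_zero, add_zero, ← pow_succ, ← pow_succ]
      rw [pow_succ Z, ih, add_mul, h1, smul_mul_assoc, hJZ, smul_smul]
      congr 2
      ring
  intro p hp
  rcases p with _ | m
  · have hk : k = 0 := by omega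
    subst hk
    rw [pow_zero] at hN
    exact absurd hN one_ne_zero
  · rw [key m, pow_eq_zero_of_le hp hN, zero_add]
end

section
/- Let N_A be an m×m real matrix with all row sums and column sums zero and N_A^k = 0, and let N_Q be an n×n real matrix with all row sums and column sums zero and N_Q^k = 0, where k ≥ 1. Let J_n and J_m denote the n×n and m×m all-ones matrices. Then (J_n ⊗ N_A + N_Q ⊗ J_m)^k = 0; that is, the sum is nilpotent of index at most k. -/
open Matrix BigOperators Kronecker

theorem aux_add_pow {R : Type*} [Ring R] (x y : R) (hxy : x * y = 0) (hyx : y * x = 0) (j : ℕ) :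
    (x + y) ^ (j + 1) = x ^ (j + 1) + y ^ (j + 1) := by
  induction j with
  | zero => simp
  | succ j ih =>
    rw [pow_succ, ih, add_mul, mul_add, mul_add, pow_succ x j, pow_succ y j,
      mul_assoc _ x y, mul_assoc _ y x, hxy, hyx, pow_succ x (j + 1), pow_succ y (j + 1),
      pow_succ x j, pow_succ y j]
    simp

theorem aux_kron_pow {m n : ℕ} (A : Matrix (Fin n) (Fin n) ℝ) (B : Matrix (Fin m) (Fin m) ℝ)
    (j : ℕ) : (A ⊗ₖ B) ^ j = (A ^ j) ⊗ₖ (B ^ j) := by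
  induction j with
  | zero => simp
  | succ j ih => rw [pow_succ, ih, pow_succ, pow_succ, Matrix.mul_kronecker_mul]

/-- If `N_A` and `N_Q` have all row and column sums zero and
`N_A ^ k = 0`, `N_Q ^ k = 0` with `k ≥ 1`, then
`(J_n ⊗ N_A + N_Q ⊗ J_m) ^ k = 0`. -/
theorem kronecker_sum_nilpotent {m n k : ℕ} (hk : 1 ≤ k)
    (NA : Matrix (Fin m) (Fin m) ℝ) (NQ : Matrix (Fin n) (Fin n) ℝ)
    (hArow : ∀ i, ∑ j, NA i j = 0) (hAcol : ∀ j, ∑ i, NA i j = 0)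
    (hQrow : ∀ i, ∑ j, NQ i j = 0) (hQcol : ∀ j, ∑ i, NQ i j = 0)
    (hAnil : NA ^ k = 0) (hQnil : NQ ^ k = 0)
    (Jn : Matrix (Fin n) (Fin n) ℝ) (hJn : Jn = Matrix.of fun _ _ => (1 : ℝ))
    (Jm : Matrix (Fin m) (Fin m) ℝ) (hJm : Jm = Matrix.of fun _ _ => (1 : ℝ)) :
    (Jn ⊗ₖ NA + NQ ⊗ₖ Jm) ^ k = 0 := by
  have h1 : Jn * NQ = 0 := by
    subst hJn; ext i j; simp [Matrix.mul_apply, hQcol]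
  have h2 : NQ * Jn = 0 := by
    subst hJn; ext i j; simp [Matrix.mul_apply, hQrow]
  obtain ⟨j, rfl⟩ : ∃ j, k = j + 1 := ⟨k - 1, by omega⟩
  rw [aux_add_pow, aux_kron_pow, aux_kron_pow, hAnil, hQnil]
  · simp
  · rw [← Matrix.mul_kronecker_mul, h1]; simp
  · rw [← Matrix.mul_kronecker_mul, h2]; simp
end

section
/- Let sud4a be the 4×4 rational matrix [[1,2,3,4],[3,4,1,2],[4,3,2,1],[2,1,4,3]]. Then the matrix rank of sud4a is 3, the rank of sud4a² is 2, and the rank of sud4a³ is 1. -/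
open Matrix

/-- The diagonal Latin square `sud4a`, as a rational matrix. -/
def sud4a : Matrix (Fin 4) (Fin 4) ℚ :=
  !![1, 2, 3, 4;
     3, 4, 1, 2;
     4, 3, 2, 1;
     2, 1, 4, 3]

/-- A rank factorization together with a nonsingular compression pins the rank. -/
theorem rank_of_factor {r : ℕ} (A : Matrix (Fin 4) (Fin 4) ℚ)
    (B : Matrix (Fin 4) (Fin r) ℚ) (C : Matrix (Fin r) (Fin 4) ℚ)
    (P : Matrix (Fin r) (Fin 4) ℚ) (Q : Matrix (Fin 4) (Fin r) ℚ)
    (h : A = B * C) (h1 : P * A * Q = 1) : A.rank = r := by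
  apply le_antisymm
  · rw [h]
    refine (Matrix.rank_mul_le_left B C).trans ?_
    simpa using Matrix.rank_le_card_width B
  · have h2 : (P * A * Q).rank = r := by rw [h1]; simp
    calc r = (P * A * Q).rank := h2.symm
      _ ≤ (P * A).rank := Matrix.rank_mul_le_left _ _
      _ ≤ A.rank := Matrix.rank_mul_le_right _ _

theorem sud4a_sq : sud4a ^ 2 =
    !![27, 23, 27, 23; 23, 27, 23, 27; 23, 27, 23, 27; 27, 23, 27, 23] := by
  rw [pow_two]
  ext i j
  fin_cases i <;> fin_cases j <;> norm_num [sud4a, Matrix.mul_apply, Fin.sum_univ_succ]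

theorem sud4a_cube : sud4a ^ 3 = Matrix.of fun _ _ => 250 := by
  rw [pow_succ, sud4a_sq]
  ext i j
  fin_cases i <;> fin_cases j <;> norm_num [sud4a, Matrix.mul_apply, Fin.sum_univ_succ]

/-- the ranks of `sud4a`, `sud4a²` and `sud4a³` are 3, 2, 1. -/
theorem sud4a_ranks :
    sud4a.rank = 3 ∧ (sud4a ^ 2).rank = 2 ∧ (sud4a ^ 3).rank = 1 := by
  refine ⟨?_, ?_, ?_⟩
  · apply rank_of_factor _ !![1, 2, 3; 3, 4, 1; 4, 3, 2; 2, 1, 4]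
      !![1, 0, 0, -1; 0, 1, 0, 1; 0, 0, 1, 1]
      !![0, -1/2, 3/4, -1/4; 0, 3/5, -1/2, 1/10; 0, 1/10, -1/4, 7/20]
      !![1, 0, 0; 0, 1, 0; 0, 0, 1; 0, 0, 0] <;> ext i j <;>
    fin_cases i <;> fin_cases j <;> norm_num [sud4a, Matrix.mul_apply, Fin.sum_univ_succ]
  · rw [sud4a_sq]
    apply rank_of_factor _ !![27, 23; 23, 27; 23, 27; 27, 23]
      !![1, 0, 1, 0; 0, 1, 0, 1]
      !![0, 0, -23/200, 27/200; 0, 0, 27/200, -23/200]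
      !![1, 0; 0, 1; 0, 0; 0, 0] <;> ext i j <;>
    fin_cases i <;> fin_cases j <;> norm_num [Matrix.mul_apply, Fin.sum_univ_succ]
  · rw [sud4a_cube]
    apply rank_of_factor _ !![250; 250; 250; 250] !![1, 1, 1, 1]
      !![0, 0, 0, 1/250] !![1; 0; 0; 0] <;> ext i j <;>
    fin_cases i <;> fin_cases j <;> norm_num [Matrix.vecHead, Matrix.vecTail, Matrix.mul_apply, Fin.sum_univ_succ]
end

section
/- Let f360 be the 4×4 integer matrix [[2,11,7,14],[13,8,12,1],[16,5,9,4],[3,10,6,15]]. Then the characteristic polynomial of f360 equals X^4 - 34·X^3, and f360³ = 9826•J₄ where J₄ is the 4×4 all-ones matrix; hence all powers f360ᵖ with p ≥ 3 are constant matrices. -/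
open Matrix Polynomial

/-- The associative magic square `f360`, as an integer matrix. -/
def f360 : Matrix (Fin 4) (Fin 4) ℤ :=
  !![2, 11, 7, 14;
     13, 8, 12, 1;
     16, 5, 9, 4;
     3, 10, 6, 15]

/-- The 4×4 all-ones matrix. -/
def J4 : Matrix (Fin 4) (Fin 4) ℤ := Matrix.of fun _ _ => 1

/-- `f360` has characteristic polynomial `X^4 - 34·X^3`,
`f360³ = 9826 • J₄`, hence all powers `f360ᵖ` with `p ≥ 3` are constant. -/
theorem f360_charpoly_and_cube :
    f360.charpoly = X ^ 4 - C 34 * X ^ 3 ∧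
    f360 ^ 3 = (9826 : ℤ) • J4 ∧
    ∀ p : ℕ, 3 ≤ p → ∃ c : ℤ, f360 ^ p = c • J4 := by
  have hc : f360 ^ 3 = (9826 : ℤ) • J4 := by
    rw [pow_succ, pow_two]
    ext i j
    fin_cases i <;> fin_cases j <;>
      simp [f360, J4, Matrix.mul_apply, Fin.sum_univ_four]
  have hJ : J4 * f360 = (34 : ℤ) • J4 := by
    ext i j
    fin_cases i <;> fin_cases j <;>
      simp [f360, J4, Matrix.mul_apply, Fin.sum_univ_four]
  refine ⟨?_, hc, ?_⟩
  · have h : f360.charmatrix =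
        !![X - C 2, -C 11, -C 7, -C 14;
           -C 13, X - C 8, -C 12, -C 1;
           -C 16, -C 5, X - C 9, -C 4;
           -C 3, -C 10, -C 6, X - C 15] := by
      ext1 i j
      fin_cases i <;> fin_cases j <;> simp [f360, Matrix.charmatrix_apply]
    rw [Matrix.charpoly, h]
    simp [Matrix.det_succ_row_zero, Fin.sum_univ_succ, Fin.succAbove]
    ring
  · intro p hp
    induction p, hp using Nat.le_induction with
    | base => exact ⟨_, hc⟩
    | succ n _ ih =>
      obtain ⟨c, h⟩ := ih
      exact ⟨c * 34, by rw [pow_succ, h, Matrix.smul_mul, hJ, smul_smul]⟩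
end

section
/- Let BF be the 8×8 integer matrix [[14,3,62,51,46,35,30,19],[52,61,4,13,20,29,36,45],[11,6,59,54,43,38,27,22],[53,60,5,12,21,28,37,44],[55,58,7,10,23,26,39,42],[9,8,57,56,41,40,25,24],[50,63,2,15,18,31,34,47],[16,1,64,49,48,33,32,17]]. Then the characteristic polynomial of BF equals X^8 - 260·X^7, and BF³ = 2197000•J₈ where J₈ is the 8×8 all-ones matrix; hence all powers BFᵖ with p ≥ 3 are constant matrices. -/
open Matrix Polynomial

/-- The 8×8 magic square `BF` of Cook, Bacon and Hillman, obtained by row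
permutations of a Franklin bent-diagonal square. -/
def BF : Matrix (Fin 8) (Fin 8) ℤ :=
  !![14, 3, 62, 51, 46, 35, 30, 19;
     52, 61, 4, 13, 20, 29, 36, 45;
     11, 6, 59, 54, 43, 38, 27, 22;
     53, 60, 5, 12, 21, 28, 37, 44;
     55, 58, 7, 10, 23, 26, 39, 42;
     9, 8, 57, 56, 41, 40, 25, 24;
     50, 63, 2, 15, 18, 31, 34, 47;
     16, 1, 64, 49, 48, 33, 32, 17]

/-- The 8×8 all-ones matrix. -/
def J8 : Matrix (Fin 8) (Fin 8) ℤ := Matrix.of fun _ _ => 1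

/-- Left factor of the rank-three factorization of `BF`. -/
def BFU : Matrix (Fin 8) (Fin 3) ℤ :=
  !![14, -3, 0; 52, -61, 41; 11, -6, 3; 53, -60, 40;
     55, -58, 38; 9, -8, 5; 50, -63, 43; 16, -1, -2]

/-- Right factor of the rank-three factorization of `BF`. -/
def BFV : Matrix (Fin 3) (Fin 8) ℤ :=
  !![1, 0, 1105, 1104, 737, 736, 369, 368;
     0, -1, 5136, 5135, 3424, 3423, 1712, 1711;
     0, 0, 6240, 6240, 4160, 4160, 2080, 2080]

theorem BF_eq_mul : BF = BFU * BFV := by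
  ext i j
  fin_cases i <;> fin_cases j <;> decide +kernel

theorem BFV_mul_BFU : BFV * BFU =
    !![142178, -145122, 94292; 660702, -674398, 438188; 802880, -819520, 532480] := by
  ext i j
  fin_cases i <;> fin_cases j <;> decide +kernel

theorem BF_charpoly : BF.charpoly = X ^ 8 - C 260 * X ^ 7 := by
  rw [BF_eq_mul, Matrix.charpoly_mul_comm_of_le _ _ (by simp), BFV_mul_BFU,
    Matrix.charpoly, Matrix.det_fin_three]
  simp [charmatrix_apply]
  ring

theorem BF_cube : BF ^ 3 = (2197000 : ℤ) • J8 := by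
  rw [pow_succ, pow_two]
  decide +kernel

theorem BF_mul_J8 : BF * J8 = (260 : ℤ) • J8 := by
  decide +kernel

/-- `BF` has characteristic polynomial `X^8 - 260·X^7`,
`BF³ = 2197000 • J₈`, hence all powers `BFᵖ` with `p ≥ 3` are constant. -/
theorem BF_charpoly_and_cube :
    BF.charpoly = X ^ 8 - C 260 * X ^ 7 ∧
    BF ^ 3 = (2197000 : ℤ) • J8 ∧
    ∀ p : ℕ, 3 ≤ p → ∃ c : ℤ, BF ^ p = c • J8 := by
  refine ⟨BF_charpoly, BF_cube, fun p hp => ?_⟩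
  induction p, hp using Nat.le_induction with
  | base => exact ⟨_, BF_cube⟩
  | succ n _ ih =>
    obtain ⟨c, hc⟩ := ih
    exact ⟨c * 260, by rw [pow_succ', hc, Matrix.mul_smul, BF_mul_J8, smul_smul]⟩
end
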